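/- The function 𝔄 has no zeros off the ray e^{-iπ/3}·ℝ⁺: for every z₀ ∈ ℂ with z₀ ∉ {e^{-iπ/3}·r : r > 0}, one has 𝔄(z₀) ≠ 0. -/

import Mathlib

/-- The Airy-type function 𝔄, defined as the contour integral
`π^{-1/2} ∫_Γ exp(t³/3 − z·t) dt` over the contour Γ running from −∞ along the
negative real axis to 0 and then from 0 along the ray `e^{-iπ/3}·ℝ⁺`. -/
noncomputable def Afun (z : ℂ) : ℂ :=
  (Real.sqrt Real.pi : ℂ)⁻¹ *
    ((∫ s in Set.Ioi (0:ℝ), Complex.exp (-(s:ℂ)^3/3 + z * s)) +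
      Complex.exp (-(Real.pi * Complex.I)/3) *
        ∫ s in Set.Ioi (0:ℝ),
          Complex.exp (-(s:ℂ)^3/3 - Complex.exp (-(Real.pi * Complex.I)/3) * z * s))

open MeasureTheory Set Filter Topology

/-- The integrand `sᵏ exp(-s³/3 - c s)` of the half-line moments of the Airy kernel. -/
noncomputable def airyKernel (k : ℕ) (c : ℂ) (s : ℝ) : ℂ :=
  (s : ℂ) ^ k * Complex.exp (-(s : ℂ) ^ 3 / 3 - c * s)

/-- The half-line moments `∫₀^∞ sᵏ exp(-s³/3 - c s) ds` of the Airy kernel. -/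
noncomputable def airyMoment (k : ℕ) (c : ℂ) : ℂ :=
  ∫ s in Ioi (0 : ℝ), airyKernel k c s

lemma norm_airyKernel {s : ℝ} (hs : 0 ≤ s) (k : ℕ) (c : ℂ) :
    ‖airyKernel k c s‖ = s ^ k * Real.exp (-s ^ 3 / 3 - c.re * s) := by
  have h : (-(s : ℂ) ^ 3 / 3 - c * s) = ((-s ^ 3 / 3 : ℝ) : ℂ) - c * s := by push_cast; ring
  rw [airyKernel, norm_mul, norm_pow, Complex.norm_real, Real.norm_of_nonneg hs,
    Complex.norm_exp, h, Complex.sub_re, Complex.ofReal_re, Complex.re_mul_ofReal]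

lemma continuous_airyKernel (k : ℕ) (c : ℂ) : Continuous (airyKernel k c) := by
  unfold airyKernel
  fun_prop

lemma exists_norm_airyKernel_le (k : ℕ) (M : ℝ) :
    ∃ B : ℝ, ∀ c : ℂ, -M ≤ c.re → ∀ s : ℝ, 0 ≤ s →
      ‖airyKernel k c s‖ ≤ B * Real.exp (-s) := by
  set K : ℝ := |M| + 2 with hK
  have hK2 : 2 ≤ K := by have := abs_nonneg M; linarith
  refine ⟨k.factorial * Real.exp (K * (K + 3)), fun c hc s hs => ?_⟩
  rw [norm_airyKernel hs]
  have hpow : s ^ k ≤ k.factorial * Real.exp s := by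
    have := Real.pow_div_factorial_le_exp s hs k
    rwa [div_le_iff₀' (by positivity)] at this
  have hcub : K * s - s ^ 3 / 3 ≤ K * (K + 3) := by
    rcases le_total s (K + 3) with h | h
    · have : 0 ≤ s ^ 3 := by positivity
      nlinarith
    · have h1 : K * s ≤ s * s := by nlinarith
      have h2 : 3 * (s * s) ≤ s ^ 3 := by nlinarith [mul_nonneg hs hs]
      nlinarith
  have hexp : s + (-s ^ 3 / 3 - c.re * s) ≤ K * (K + 3) + -s := by
    have h1 : -c.re * s ≤ |M| * s :=
      mul_le_mul_of_nonneg_right (by linarith [le_abs_self M]) hs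
    have h2 : K * s = |M| * s + 2 * s := by rw [hK]; ring
    linarith
  calc s ^ k * Real.exp (-s ^ 3 / 3 - c.re * s)
      ≤ k.factorial * Real.exp s * Real.exp (-s ^ 3 / 3 - c.re * s) := by gcongr
    _ = k.factorial * Real.exp (s + (-s ^ 3 / 3 - c.re * s)) := by
        rw [Real.exp_add, mul_assoc]
    _ ≤ k.factorial * Real.exp (K * (K + 3) + -s) := by gcongr
    _ = k.factorial * Real.exp (K * (K + 3)) * Real.exp (-s) := by
        rw [Real.exp_add, mul_assoc]

lemma integrableOn_const_mul_exp_neg (B : ℝ) :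
    IntegrableOn (fun s : ℝ => B * Real.exp (-s)) (Ioi 0) :=
  (integrableOn_exp_neg_Ioi 0).const_mul B

lemma integrableOn_airyKernel (k : ℕ) (c : ℂ) : IntegrableOn (airyKernel k c) (Ioi 0) := by
  obtain ⟨B, hB⟩ := exists_norm_airyKernel_le k (-c.re)
  refine (integrableOn_const_mul_exp_neg B).mono'
    (continuous_airyKernel k c).aestronglyMeasurable ?_
  filter_upwards [ae_restrict_mem measurableSet_Ioi] with s hs
  exact hB c (by simp) s (le_of_lt hs)

lemma hasDerivAt_airyKernel (k : ℕ) (c : ℂ) (s : ℝ) :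
    HasDerivAt (fun c => airyKernel k c s) (-airyKernel (k + 1) c s) c := by
  have h : HasDerivAt (fun c : ℂ => -(s : ℂ) ^ 3 / 3 - c * s) (-(1 * (s : ℂ))) c :=
    ((hasDerivAt_id c).mul_const (s : ℂ)).const_sub _
  refine (h.cexp.const_mul ((s : ℂ) ^ k)).congr_deriv ?_
  unfold airyKernel
  ring

lemma hasDerivAt_airyMoment (k : ℕ) (c : ℂ) :
    HasDerivAt (airyMoment k) (-airyMoment (k + 1) c) c := by
  obtain ⟨B, hB⟩ := exists_norm_airyKernel_le (k + 1) (1 - c.re)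
  have h := hasDerivAt_integral_of_dominated_loc_of_deriv_le
    (μ := volume.restrict (Ioi (0 : ℝ))) (F := airyKernel k)
    (F' := fun c s => -airyKernel (k + 1) c s)
    (bound := fun s => B * Real.exp (-s)) (Metric.ball_mem_nhds c one_pos)
    (Eventually.of_forall fun x => (continuous_airyKernel k x).aestronglyMeasurable)
    (integrableOn_airyKernel k c)
    (continuous_airyKernel (k + 1) c).neg.aestronglyMeasurable ?_
    (integrableOn_const_mul_exp_neg B)
    (Eventually.of_forall fun s x _ => hasDerivAt_airyKernel k x s)
  · have h2 := h.2
    rw [integral_neg] at h2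
    exact h2
  · filter_upwards [ae_restrict_mem measurableSet_Ioi] with s hs x hx
    rw [norm_neg]
    refine hB x ?_ s (le_of_lt hs)
    have h1 : |(x - c).re| ≤ ‖x - c‖ := Complex.abs_re_le_norm _
    rw [Metric.mem_ball, dist_eq_norm] at hx
    rw [Complex.sub_re] at h1
    linarith [neg_abs_le (x.re - c.re)]

lemma airyMoment_two (c : ℂ) : airyMoment 2 c = 1 - c * airyMoment 0 c := by
  have hderiv : ∀ s : ℝ, HasDerivAt (airyKernel 0 c)
      (-(airyKernel 2 c s + c * airyKernel 0 c s)) s := by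
    intro s
    have h0 : HasDerivAt (fun s : ℝ => (s : ℂ)) 1 s := Complex.ofRealCLM.hasDerivAt
    have h := ((((h0.fun_pow 3).neg.div_const 3).sub (h0.const_mul c)).cexp).const_mul
      ((s : ℂ) ^ 0)
    simp only [airyKernel, pow_zero] at h ⊢
    refine h.congr_deriv ?_
    simp
    ring
  have hint : IntegrableOn (fun s => -(airyKernel 2 c s + c * airyKernel 0 c s)) (Ioi 0) :=
    ((integrableOn_airyKernel 2 c).add ((integrableOn_airyKernel 0 c).const_mul c)).neg
  have hlim : Tendsto (airyKernel 0 c) atTop (𝓝 0) := by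
    obtain ⟨B, hB⟩ := exists_norm_airyKernel_le 0 (-c.re)
    have hexp : Tendsto (fun s : ℝ => B * Real.exp (-s)) atTop (𝓝 0) := by
      simpa using (Real.tendsto_exp_neg_atTop_nhds_zero).const_mul B
    refine squeeze_zero_norm' ?_ hexp
    filter_upwards [eventually_ge_atTop 0] with s hs using hB c (by simp) s hs
  have h := integral_Ioi_of_hasDerivAt_of_tendsto'
    (a := 0) (fun s _ => hderiv s) hint hlim
  rw [integral_neg, integral_add (integrableOn_airyKernel 2 c)
    ((integrableOn_airyKernel 0 c).const_mul c), integral_const_mul] at h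
  have h1 : airyKernel 0 c 0 = 1 := by simp [airyKernel]
  rw [h1] at h
  unfold airyMoment
  linear_combination -h

lemma tendsto_airyMoment (k : ℕ) {b : ℂ} (hb : 0 < b.re) (w : ℂ) :
    Tendsto (fun x : ℝ => airyMoment k (b * (w + x))) atTop (𝓝 0) := by
  obtain ⟨B, hB⟩ := exists_norm_airyKernel_le k (-(b * w).re)
  have hre : ∀ x : ℝ, (b * (w + x)).re = (b * w).re + b.re * x := by
    intro x
    rw [mul_add, Complex.add_re, Complex.re_mul_ofReal]
  have h : Tendsto (fun x : ℝ => airyMoment k (b * (w + x))) atTop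
      (𝓝 (∫ _ in Ioi (0 : ℝ), (0 : ℂ))) := by
    refine tendsto_integral_filter_of_dominated_convergence
      (fun s => B * Real.exp (-s))
      (Eventually.of_forall fun x => (continuous_airyKernel k _).aestronglyMeasurable) ?_
      (integrableOn_const_mul_exp_neg B) ?_
    · filter_upwards [eventually_ge_atTop 0] with x hx
      filter_upwards [ae_restrict_mem measurableSet_Ioi] with s hs
      refine hB _ ?_ s (le_of_lt hs)
      rw [hre, neg_neg]
      nlinarith
    · filter_upwards [ae_restrict_mem measurableSet_Ioi] with s hs
      have hs : 0 < s := hs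
      rw [tendsto_zero_iff_norm_tendsto_zero]
      have hbot : Tendsto (fun x : ℝ => -s ^ 3 / 3 - (b * w).re * s - b.re * s * x)
          atTop atBot :=
        tendsto_atBot_add_const_left atTop _
          (tendsto_neg_atTop_atBot.comp (tendsto_id.const_mul_atTop (mul_pos hb hs)))
      have hz := (Real.tendsto_exp_atBot.comp hbot).const_mul (s ^ k)
      rw [mul_zero] at hz
      refine hz.congr fun x => ?_
      rw [norm_airyKernel hs.le, hre, Function.comp_apply]
      ring_nf
  simpa using h

/-- For `a³ = -1` this combination of moments solves the Airy equation. -/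
noncomputable def airySolution (a w : ℂ) : ℂ :=
  airyMoment 0 (a * w) + a * airyMoment 0 (-a ^ 2 * w)

/-- The derivative of `airySolution a` when `a³ = -1`. -/
noncomputable def airySolutionDeriv (a w : ℂ) : ℂ :=
  -(a * airyMoment 1 (a * w)) - airyMoment 1 (-a ^ 2 * w)

lemma hasDerivAt_airyMoment_const_mul (k : ℕ) (b w : ℂ) :
    HasDerivAt (fun w => airyMoment k (b * w)) (-airyMoment (k + 1) (b * w) * (b * 1)) w :=
  (hasDerivAt_airyMoment k (b * w)).comp w ((hasDerivAt_id w).const_mul b)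

lemma hasDerivAt_airySolution {a : ℂ} (ha : a ^ 3 = -1) (w : ℂ) :
    HasDerivAt (airySolution a) (airySolutionDeriv a w) w := by
  refine ((hasDerivAt_airyMoment_const_mul 0 a w).add
    ((hasDerivAt_airyMoment_const_mul 0 (-a ^ 2) w).const_mul a)).congr_deriv ?_
  simp only [airySolutionDeriv, zero_add]
  linear_combination airyMoment 1 (-a ^ 2 * w) * ha

lemma hasDerivAt_airySolutionDeriv {a : ℂ} (ha : a ^ 3 = -1) (w : ℂ) :
    HasDerivAt (airySolutionDeriv a) (w * airySolution a w) w := by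
  refine ((hasDerivAt_airyMoment_const_mul 1 a w).const_mul a).neg.sub
    (hasDerivAt_airyMoment_const_mul 1 (-a ^ 2) w) |>.congr_deriv ?_
  simp only [airySolution, Nat.reduceAdd, airyMoment_two]
  linear_combination (-w * airyMoment 0 (a * w) - a * w * airyMoment 0 (-a ^ 2 * w)) * ha

lemma airyMoment_zero_zero_ne_zero : airyMoment 0 0 ≠ 0 := by
  have hreal : ∀ s : ℝ, airyKernel 0 0 s = ((Real.exp (-s ^ 3 / 3) : ℝ) : ℂ) := by
    intro s
    simp [airyKernel]
  have hint : IntegrableOn (fun s : ℝ => Real.exp (-s ^ 3 / 3)) (Ioi 0) := by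
    have h := (integrableOn_airyKernel 0 0).re
    refine h.congr (Eventually.of_forall fun s => ?_)
    simp only [hreal]
    exact Complex.ofReal_re _
  rw [airyMoment, integral_congr_ae (Eventually.of_forall hreal), integral_complex_ofReal]
  refine Complex.ofReal_ne_zero.mpr (ne_of_gt ?_)
  rw [setIntegral_pos_iff_support_of_nonneg_ae
    (Eventually.of_forall fun s => (Real.exp_pos _).le) hint]
  have hsupp : Function.support (fun s : ℝ => Real.exp (-s ^ 3 / 3)) = univ :=
    Function.support_eq_univ fun s => (Real.exp_pos _).ne'
  rw [hsupp, univ_inter, Real.volume_Ioi]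
  exact ENNReal.zero_lt_top

lemma airySolution_zero_ne_zero {a : ℂ} (ha : 0 < a.re) : airySolution a 0 ≠ 0 := by
  have h : airySolution a 0 = (1 + a) * airyMoment 0 0 := by
    simp only [airySolution, mul_zero]
    ring
  rw [h]
  refine mul_ne_zero (fun h0 => ?_) airyMoment_zero_zero_ne_zero
  have := congrArg Complex.re h0
  simp only [Complex.add_re, Complex.one_re, Complex.zero_re] at this
  linarith

lemma exists_airySolution_add_ne_zero {a : ℂ} (ha : a ^ 3 = -1) (hre : 0 < a.re) (w : ℂ) :
    ∃ x : ℝ, 0 < x ∧ airySolution a (w + x) ≠ 0 := by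
  by_contra! hzero
  have hd : Differentiable ℂ (airySolution a) := fun v =>
    (hasDerivAt_airySolution ha v).differentiableAt
  have han : AnalyticOnNhd ℂ (airySolution a) univ := hd.differentiableOn.analyticOnNhd isOpen_univ
  refine airySolution_zero_ne_zero hre (han.eqOn_zero_of_preconnected_of_frequently_eq_zero
    isPreconnected_univ (mem_univ w) ?_ (mem_univ 0))
  have hlim : Tendsto (fun x : ℝ => w + (x : ℂ)) (𝓝[>] 0) (𝓝[≠] w) := by
    refine tendsto_nhdsWithin_iff.mpr ⟨?_, ?_⟩
    · have hc : Continuous fun x : ℝ => w + (x : ℂ) := by fun_prop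
      simpa using (hc.tendsto 0).mono_left nhdsWithin_le_nhds
    · filter_upwards [self_mem_nhdsWithin] with x hx
      simpa using (ne_of_gt hx : x ≠ 0)
  refine hlim.frequently (Eventually.frequently ?_)
  filter_upwards [self_mem_nhdsWithin] with x hx using hzero x hx

lemma tendsto_airySolution {a : ℂ} (h1 : 0 < a.re) (h2 : 0 < (-a ^ 2).re) (w : ℂ) :
    Tendsto (fun x : ℝ => airySolution a (w + x)) atTop (𝓝 0) := by
  have h := (tendsto_airyMoment 0 h1 w).add ((tendsto_airyMoment 0 h2 w).const_mul a)
  rwa [mul_zero, add_zero] at h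

lemma tendsto_airySolutionDeriv {a : ℂ} (h1 : 0 < a.re) (h2 : 0 < (-a ^ 2).re) (w : ℂ) :
    Tendsto (fun x : ℝ => airySolutionDeriv a (w + x)) atTop (𝓝 0) := by
  have h := ((tendsto_airyMoment 1 h1 w).const_mul a).neg.sub (tendsto_airyMoment 1 h2 w)
  rwa [mul_zero, neg_zero, sub_zero] at h

/-- A function on `[0, ∞)` that starts at `0`, tends to `0` and has nonnegative derivative has
zero derivative. -/
lemma deriv_eq_zero_of_nonneg_of_tendsto_zero {f f' : ℝ → ℝ} (hf : ∀ x, HasDerivAt f (f' x) x)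
    (hf' : ∀ x, 0 < x → 0 ≤ f' x) (h0 : f 0 = 0) (hlim : Tendsto f atTop (𝓝 0)) {x : ℝ}
    (hx : 0 < x) : f' x = 0 := by
  have hmono : MonotoneOn f (Ici 0) := by
    refine monotoneOn_of_hasDerivWithinAt_nonneg (f' := f') (convex_Ici 0)
      (fun y _ => (hf y).continuousAt.continuousWithinAt)
      (fun y _ => (hf y).hasDerivWithinAt) fun y hy => hf' y ?_
    simpa using hy
  have hzero : ∀ y, 0 < y → f y = 0 := by
    intro y hy
    refine le_antisymm (ge_of_tendsto hlim ?_) ?_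
    · filter_upwards [eventually_ge_atTop y] with t ht
      exact hmono hy.le (hy.le.trans ht) ht
    · rw [← h0]
      exact hmono self_mem_Ici hy.le hy.le
  have heq : f =ᶠ[𝓝 x] fun _ => 0 := by
    filter_upwards [lt_mem_nhds hx] with y hy using hzero y hy
  exact (hf x).unique ((hasDerivAt_const x 0).congr_of_eventuallyEq heq)

/-- The recessive Airy solution vanishes only on the negative real axis. -/
lemma airySolution_ne_zero {a : ℂ} (ha : a ^ 3 = -1) (h1 : 0 < a.re) (h2 : 0 < (-a ^ 2).re)
    {w : ℂ} (hw : w.im ≠ 0 ∨ 0 ≤ w.re) : airySolution a w ≠ 0 := by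
  intro hzero
  obtain ⟨l, hl, hlw⟩ : ∃ l : ℂ, 0 ≤ l.re ∧ ∀ x : ℝ, 0 < x → 0 < (l * (w + x)).re := by
    rcases hw with h | h
    · refine ⟨-(w.im * Complex.I), by simp, fun x _ => ?_⟩
      simp only [Complex.mul_re, Complex.neg_re, Complex.neg_im, Complex.ofReal_re,
        Complex.ofReal_im, Complex.I_re, Complex.I_im, Complex.mul_im, Complex.add_re,
        Complex.add_im]
      nlinarith [mul_self_pos.mpr h]
    · exact ⟨1, by simp, fun x hx => by simpa using add_pos_of_nonneg_of_pos h hx⟩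
  have hu : ∀ x : ℝ, HasDerivAt (fun x : ℝ => airySolution a (w + x))
      (airySolutionDeriv a (w + x)) x := fun x =>
    ((hasDerivAt_airySolution ha (w + x)).comp_const_add w x).comp_ofReal
  have hv : ∀ x : ℝ, HasDerivAt (fun x : ℝ => airySolutionDeriv a (w + x))
      ((w + x) * airySolution a (w + x)) x := fun x =>
    ((hasDerivAt_airySolutionDeriv ha (w + x)).comp_const_add w x).comp_ofReal
  set u : ℝ → ℂ := fun x => airySolution a (w + x) with hu_def
  set v : ℝ → ℂ := fun x => airySolutionDeriv a (w + x) with hv_def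
  have hderiv : ∀ x : ℝ, HasDerivAt (fun x => (l * (v x * star (u x))).re)
      (l.re * Complex.normSq (v x) + (l * (w + x)).re * Complex.normSq (u x)) x := by
    intro x
    have h := Complex.reCLM.hasFDerivAt.comp_hasDerivAt x
      (((hv x).mul (hu x).star).const_mul l)
    refine h.congr_deriv ?_
    change (l * ((w + x) * u x * star (u x) + v x * star (v x))).re = _
    have e : l * ((w + x) * u x * star (u x) + v x * star (v x)) =
        l * (Complex.normSq (v x) : ℂ) + l * (w + x) * (Complex.normSq (u x) : ℂ) := by
      rw [← Complex.mul_conj, ← Complex.mul_conj]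
      simp only [Complex.star_def]
      ring
    rw [e, Complex.add_re, Complex.re_mul_ofReal, Complex.re_mul_ofReal]
  have hlim : Tendsto (fun x => (l * (v x * star (u x))).re) atTop (𝓝 0) := by
    have h := (((tendsto_airySolutionDeriv h1 h2 w).mul
      (tendsto_airySolution h1 h2 w).star).const_mul l)
    rw [zero_mul, mul_zero] at h
    exact (Complex.continuous_re.tendsto 0).comp h
  have hstart : (l * (v 0 * star (u 0))).re = 0 := by simp [hu_def, hzero]
  obtain ⟨x, hx, hne⟩ := exists_airySolution_add_ne_zero ha h1 w
  have key := deriv_eq_zero_of_nonneg_of_tendsto_zero hderiv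
    (fun y hy => add_nonneg (mul_nonneg hl (Complex.normSq_nonneg _))
      (mul_nonneg (hlw y hy).le (Complex.normSq_nonneg _))) hstart hlim hx
  have hpos : 0 < (l * (w + x)).re * Complex.normSq (u x) :=
    mul_pos (hlw x hx) (Complex.normSq_pos.mpr hne)
  linarith [mul_nonneg hl (Complex.normSq_nonneg (v x))]

lemma Afun_eq_airySolution (w : ℂ) :
    Afun (-(Complex.exp (-(Real.pi * Complex.I) / 3)) * w) =
      (Real.sqrt Real.pi : ℂ)⁻¹ * airySolution (Complex.exp (-(Real.pi * Complex.I) / 3)) w := by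
  simp only [Afun, airySolution, airyMoment, airyKernel, pow_zero, one_mul]
  congr 2
  · refine integral_congr_ae (Eventually.of_forall fun s => ?_)
    ring_nf
  · refine congrArg _ (integral_congr_ae (Eventually.of_forall fun s => ?_))
    ring_nf

lemma exp_neg_pi_mul_I_div_three :
    Complex.exp (-(Real.pi * Complex.I) / 3) = ⟨1 / 2, -(Real.sqrt 3 / 2)⟩ := by
  have h : -(Real.pi * Complex.I) / 3 = ((-(Real.pi / 3) : ℝ) : ℂ) * Complex.I := by
    push_cast; ring
  rw [h]
  apply Complex.ext
  · rw [Complex.exp_ofReal_mul_I_re, Real.cos_neg, Real.cos_pi_div_three]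
  · rw [Complex.exp_ofReal_mul_I_im, Real.sin_neg, Real.sin_pi_div_three]

/-- Proposition 2.7: the function 𝔄 has no zeros off the ray . -/
theorem Afun_ne_zero (z₀ : ℂ)
    (hz₀ : ∀ r : ℝ, 0 < r → z₀ ≠ Complex.exp (-(Real.pi * Complex.I)/3) * r) :
    Afun z₀ ≠ 0 := by
  have hcube : Complex.exp (-(Real.pi * Complex.I) / 3) ^ 3 = -1 := by
    rw [← Complex.exp_nat_mul, ← Complex.exp_pi_mul_I, Complex.exp_eq_exp_iff_exists_int]
    exact ⟨-1, by push_cast; ring⟩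
  have hsqrt : Real.sqrt 3 * Real.sqrt 3 = 3 := Real.mul_self_sqrt (by norm_num)
  have hre : 0 < (Complex.exp (-(Real.pi * Complex.I) / 3)).re := by
    rw [exp_neg_pi_mul_I_div_three]; norm_num
  have hsq : 0 < (-Complex.exp (-(Real.pi * Complex.I) / 3) ^ 2).re := by
    rw [exp_neg_pi_mul_I_div_three, sq, Complex.neg_re, Complex.mul_re]
    nlinarith
  have hne : Complex.exp (-(Real.pi * Complex.I) / 3) ≠ 0 := Complex.exp_ne_zero _
  obtain ⟨w, rfl⟩ : ∃ w, z₀ = -(Complex.exp (-(Real.pi * Complex.I) / 3)) * w :=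
    ⟨-z₀ / Complex.exp (-(Real.pi * Complex.I) / 3), by field_simp⟩
  rw [Afun_eq_airySolution]
  refine mul_ne_zero (inv_ne_zero (Complex.ofReal_ne_zero.mpr
    (Real.sqrt_pos.mpr Real.pi_pos).ne')) (airySolution_ne_zero hcube hre hsq ?_)
  by_contra! h
  refine hz₀ (-w.re) (by linarith) ?_
  have hw : w = (w.re : ℂ) := Complex.ext (by simp) (by simp [h.1])
  rw [Complex.ofReal_neg, ← hw]
  ring
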